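/- The map ψ_n : S_n → Y_n is a morphism of posets: if σ ≤ τ in the weak Bruhat order on S_n then ψ_n(σ) ≤ ψ_n(τ) in the weak order on Y_n. -/

import Mathlib

/-! Symmetric groups `Sₙ` are modelled as `Equiv.Perm (Fin n)` (with `0`-indexed letters, so
the letter `i ∈ {1, …, n}` of the paper corresponds to `i - 1 : Fin n`), with the group law
`σ · τ = σ * τ` given by composition: `(σ * τ) x = σ (τ x)`. -/

/-- `s` is a Coxeter generator `sᵢ`, i.e. the transposition of two consecutive letters. -/
def IsAdjacentTransposition {n : ℕ} (s : Equiv.Perm (Fin n)) : Prop :=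
  ∃ (i : ℕ) (h : i + 1 < n), s = Equiv.swap ⟨i, by omega⟩ ⟨i + 1, h⟩

/-- The length `l(σ)`: the least `k` such that `σ` is a product of `k` Coxeter
generators `sᵢ`. -/
noncomputable def permLength {n : ℕ} (σ : Equiv.Perm (Fin n)) : ℕ :=
  sInf {k | ∃ L : List (Equiv.Perm (Fin n)),
    L.length = k ∧ (∀ s ∈ L, IsAdjacentTransposition s) ∧ L.prod = σ}

/-- The weak Bruhat order on `Sₙ`: `ω ≤ σ` iff there is `τ` with `σ = τ · ω` and
`l(σ) = l(τ) + l(ω)`. -/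
def weakLe {n : ℕ} (ω σ : Equiv.Perm (Fin n)) : Prop :=
  ∃ τ : Equiv.Perm (Fin n), σ = τ * ω ∧ permLength σ = permLength τ + permLength ω

/-- The strict weak Bruhat order. -/
def weakLt {n : ℕ} (ω σ : Equiv.Perm (Fin n)) : Prop :=
  weakLe ω σ ∧ ω ≠ σ

/-- `σ × τ`: the image of `(σ, τ)` under the canonical embedding
`S_p × S_q ↪ S_{p+q}`, where `σ` permutes the first `p` letters and `τ` the last `q`. -/
def blockSum {p q : ℕ} (σ : Equiv.Perm (Fin p)) (τ : Equiv.Perm (Fin q)) :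
    Equiv.Perm (Fin (p + q)) :=
  finSumFinEquiv.symm.trans ((Equiv.sumCongr σ τ).trans finSumFinEquiv)

/-- `ξ` is a `(p,q)`-shuffle: `ξ(1) < … < ξ(p)` and `ξ(p+1) < … < ξ(p+q)`. -/
def IsShuffle (p q : ℕ) (ξ : Equiv.Perm (Fin (p + q))) : Prop :=
  (∀ i j : Fin (p + q), (i : ℕ) < (j : ℕ) → (j : ℕ) < p → ξ i < ξ j) ∧
  (∀ i j : Fin (p + q), p ≤ (i : ℕ) → (i : ℕ) < (j : ℕ) → ξ i < ξ j)

/-- `ξ_{p,q} ∈ S_{p+q}`: the permutation with one-line notation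
`(q+1, q+2, …, q+p, 1, 2, …, q)`. -/
def xi (p q : ℕ) : Equiv.Perm (Fin (p + q)) :=
  finSumFinEquiv.symm.trans ((Equiv.sumComm (Fin p) (Fin q)).trans
    (finSumFinEquiv.trans (finCongr (Nat.add_comm q p))))

/-- Transport of a permutation along an equality of the number of letters. -/
def permCast {m n : ℕ} (h : m = n) (π : Equiv.Perm (Fin m)) : Equiv.Perm (Fin n) :=
  (finCongr h).permCongr π

/-- The grafting `σ ∨ τ ∈ S_{p+q+1}` of `σ ∈ S_p` and `τ ∈ S_q`: in 1-indexed one-line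
notation, `(σ∨τ)(i) = σ(i)` for `1 ≤ i ≤ p`, `(σ∨τ)(p+1) = p+q+1`, and
`(σ∨τ)(i) = τ(i-p-1) + p` for `p+2 ≤ i ≤ p+q+1`.  (Equivalently,
`σ ∨ τ = (σ × τ × 1₁) · s_{p+q} · s_{p+q-1} · ⋯ · s_{p+1}`.) -/
def graft {p q : ℕ} (σ : Equiv.Perm (Fin p)) (τ : Equiv.Perm (Fin q)) :
    Equiv.Perm (Fin (p + q + 1)) :=
  blockSum (blockSum σ τ) (1 : Equiv.Perm (Fin 1)) *
    permCast (by omega) (blockSum (1 : Equiv.Perm (Fin p)) (finRotate (q + 1))⁻¹)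

/-- The `over` operation on permutations: `σ / τ := σ × τ`. -/
def overP {p q : ℕ} (σ : Equiv.Perm (Fin p)) (τ : Equiv.Perm (Fin q)) :
    Equiv.Perm (Fin (p + q)) :=
  blockSum σ τ

/-- The `under` operation on permutations: `σ \ τ := ξ_{p,q} · (σ × τ)`. -/
def underP {p q : ℕ} (σ : Equiv.Perm (Fin p)) (τ : Equiv.Perm (Fin q)) :
    Equiv.Perm (Fin (p + q)) :=
  xi p q * blockSum σ τ

/-- Planar binary trees: `leaf` is the tree `|` (no interior vertex) and
`node l r = l ∨ r` is the grafting of `l` and `r` (their roots are joined to a new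
vertex, which becomes the root). -/
inductive PBTree : Type
  | leaf : PBTree
  | node : PBTree → PBTree → PBTree
deriving DecidableEq

/-- The number of interior vertices of a planar binary tree: `t ∈ Yₙ` iff `t.size = n`. -/
def PBTree.size : PBTree → ℕ
  | .leaf => 0
  | .node l r => l.size + r.size + 1

/-- The weak order on planar binary trees, generated transitively by
(a) `u ≤ u' → v ≤ v' → u∨v ≤ u'∨v'` and (b) `(u∨v)∨w ≤ u∨(v∨w)`. -/
inductive TreeLe : PBTree → PBTree → Prop
  | refl (t : PBTree) : TreeLe t t
  | graft {u u' v v' : PBTree} : TreeLe u u' → TreeLe v v' →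
      TreeLe (.node u v) (.node u' v')
  | rotate (u v w : PBTree) : TreeLe (.node (.node u v) w) (.node u (.node v w))
  | trans {a b c : PBTree} : TreeLe a b → TreeLe b c → TreeLe a c

/-- The graph of the map `ψₙ : Sₙ → Yₙ`: `PsiRel σ t` holds iff `ψ(σ) = t`.
The map `ψ` sends `σ ∈ Sₙ` with `σ(i) = n` to `ψ(σˡ) ∨ ψ(σʳ)`, where
`σˡ ∈ S_{i-1}`, `σʳ ∈ S_{n-i}` are the order-preserving relabelings of the subwords of
the one-line notation of `σ` to the left and to the right of the letter `n`; equivalently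
(Proposition 1.8 of the paper), `σ = (γ × 1₁) · (σˡ ∨ σʳ)` for a (unique)
`(i-1, n-i)`-shuffle `γ`. -/
inductive PsiRel : {n : ℕ} → Equiv.Perm (Fin n) → PBTree → Prop
  | leaf (σ : Equiv.Perm (Fin 0)) : PsiRel σ .leaf
  | node {a b : ℕ} {γ : Equiv.Perm (Fin (a + b))} {σl : Equiv.Perm (Fin a)}
      {σr : Equiv.Perm (Fin b)} {tl tr : PBTree} :
      IsShuffle a b γ → PsiRel σl tl → PsiRel σr tr →
      PsiRel (blockSum γ (1 : Equiv.Perm (Fin 1)) * graft σl σr) (.node tl tr)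

/-!
Both orders are compared through inversions, that is, pairs of positions whose letters occur in
decreasing order.

The length of a permutation is its number of inversions, and an inversion of `ρ * σ` which is not an
inversion of `σ` comes from an inversion of `ρ`. If lengths add up in `τ = ρ * σ`, no inversion of
`σ` is lost, so every inversion of `σ` is an inversion of `τ`.

The tree `ψ σ` is the decreasing binary tree of the word of `σ`: its root sits at the largest
letter. Let `k` be the position of the largest letter of `τ`. No pair `(x, k)` is an inversion of
`τ`, hence of `σ`, so the letter of `σ` at `k` is a left-to-right maximum. Repeated rotations bring
such a position to the root, leaving on either side the decreasing tree of the corresponding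
subword; the two subwords are then compared by induction.
-/

theorem exists_covBy_symm_lt_of_ne_one {α : Type*} [Finite α] [LinearOrder α]
    [LocallyFiniteOrder α] {σ : Equiv.Perm α} (hσ : σ ≠ 1) :
    ∃ a b, a ⋖ b ∧ σ.symm b < σ.symm a := by
  by_contra! hasc
  have hmono : StrictMono σ.symm := (strictMono_iff_forall_covBy _).mpr fun a b hab ↦
    (hasc a b hab).lt_of_ne (σ.symm.injective.ne hab.ne)
  refine hσ (Equiv.ext fun x ↦ ?_)
  simpa using (congrFun hmono.eq_id (σ x)).symm

section Inversions

variable {α : Type*} [Fintype α] [LinearOrder α]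

/-- The inversions of a permutation `σ`, as pairs of positions `x < y` with `σ y < σ x`. -/
def inversions (σ : Equiv.Perm α) : Finset (α × α) :=
  {p | p.1 < p.2 ∧ σ p.2 < σ p.1}

theorem mk_mem_inversions {σ : Equiv.Perm α} {x y : α} :
    (x, y) ∈ inversions σ ↔ x < y ∧ σ y < σ x := by
  simp [inversions]

theorem inversions_one : inversions (1 : Equiv.Perm α) = ∅ := by
  ext ⟨x, y⟩
  simpa [mk_mem_inversions] using le_of_lt

theorem mk_apply_mem_inversions_of_mem_sdiff {ρ σ : Equiv.Perm α} {x y : α}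
    (h : (x, y) ∈ inversions (ρ * σ) \ inversions σ) : (σ x, σ y) ∈ inversions ρ := by
  simp only [Finset.mem_sdiff, mk_mem_inversions, Equiv.Perm.mul_apply, not_and, not_lt] at h ⊢
  obtain ⟨⟨hxy, hρ⟩, hσ⟩ := h
  exact ⟨(hσ hxy).lt_of_ne (σ.injective.ne hxy.ne), hρ⟩

theorem card_inversions_mul_sdiff_le (ρ σ : Equiv.Perm α) :
    (inversions (ρ * σ) \ inversions σ).card ≤ (inversions ρ).card :=
  Finset.card_le_card_of_injOn (Prod.map σ σ)
    (fun _ hp ↦ mk_apply_mem_inversions_of_mem_sdiff hp) (σ.injective.prodMap σ.injective).injOn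

theorem card_inversions_mul_le (ρ σ : Equiv.Perm α) :
    (inversions (ρ * σ)).card ≤ (inversions ρ).card + (inversions σ).card := by
  have hsdiff := card_inversions_mul_sdiff_le ρ σ
  have hle := Finset.card_le_card_sdiff_add_card (s := inversions (ρ * σ)) (t := inversions σ)
  omega

theorem inversions_subset_of_card_mul_eq {ρ σ : Equiv.Perm α}
    (h : (inversions (ρ * σ)).card = (inversions ρ).card + (inversions σ).card) :
    inversions σ ⊆ inversions (ρ * σ) := by
  have hsdiff := card_inversions_mul_sdiff_le ρ σ
  have hnew := Finset.card_sdiff_add_card (inversions (ρ * σ)) (inversions σ)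
  have hunion : inversions (ρ * σ) = inversions (ρ * σ) ∪ inversions σ :=
    Finset.eq_of_subset_of_card_le Finset.subset_union_left (by omega)
  exact hunion ▸ Finset.subset_union_right

theorem inversions_swap_of_covBy {a b : α} (hab : a ⋖ b) :
    inversions (Equiv.swap a b) = {(a, b)} := by
  ext ⟨x, y⟩
  have hle : x < b → x ≤ a := hab.le_of_lt
  have hge : a < y → b ≤ y := hab.ge_of_gt
  have hlt := hab.lt
  simp only [mk_mem_inversions, Finset.mem_singleton, Prod.mk.injEq, Equiv.swap_apply_def]
  grind

theorem inversions_swap_mul_ssubset {σ : Equiv.Perm α} {a b : α} (hab : a ⋖ b)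
    (hσ : σ.symm b < σ.symm a) : inversions (Equiv.swap a b * σ) ⊂ inversions σ := by
  refine (Finset.ssubset_iff_of_subset fun ⟨x, y⟩ hmem ↦ ?_).mpr
    ⟨(σ.symm b, σ.symm a), ?_, ?_⟩
  · by_contra hnot
    have hswap := mk_apply_mem_inversions_of_mem_sdiff (Finset.mem_sdiff.mpr ⟨hmem, hnot⟩)
    rw [inversions_swap_of_covBy hab, Finset.mem_singleton, Prod.mk.injEq] at hswap
    obtain ⟨rfl, rfl⟩ := hswap
    simp only [Equiv.symm_apply_apply] at hσ
    exact hσ.asymm (mk_mem_inversions.mp hmem).1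
  · simpa [mk_mem_inversions, hσ] using hab.lt
  · simpa [mk_mem_inversions] using fun _ ↦ hab.le

end Inversions

section Length

variable {n : ℕ}

theorem isAdjacentTransposition_iff {s : Equiv.Perm (Fin n)} :
    IsAdjacentTransposition s ↔ ∃ a b, a ⋖ b ∧ s = Equiv.swap a b := by
  constructor
  · rintro ⟨i, hi, rfl⟩
    exact ⟨_, _, by simp [Fin.covBy_iff], rfl⟩
  · rintro ⟨a, ⟨b, hb⟩, hab, rfl⟩
    obtain rfl : a.val + 1 = b := by simpa [Fin.covBy_iff] using hab
    exact ⟨a, hb, rfl⟩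

theorem card_inversions_list_prod_le (L : List (Equiv.Perm (Fin n)))
    (hL : ∀ s ∈ L, IsAdjacentTransposition s) : (inversions L.prod).card ≤ L.length := by
  induction L with
  | nil => simp [inversions_one]
  | cons s L ih =>
    rw [List.forall_mem_cons] at hL
    obtain ⟨a, b, hab, rfl⟩ := isAdjacentTransposition_iff.mp hL.1
    calc (inversions (Equiv.swap a b * L.prod)).card
        ≤ (inversions (Equiv.swap a b)).card + (inversions L.prod).card :=
          card_inversions_mul_le _ _
      _ = 1 + (inversions L.prod).card := by
          rw [inversions_swap_of_covBy hab, Finset.card_singleton]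
      _ ≤ (Equiv.swap a b :: L).length := by
          rw [List.length_cons, add_comm]
          exact Nat.add_le_add_right (ih hL.2) 1

theorem exists_adjacentTransposition_list_prod_eq (σ : Equiv.Perm (Fin n)) :
    ∃ L : List (Equiv.Perm (Fin n)),
      L.length ≤ (inversions σ).card ∧ (∀ s ∈ L, IsAdjacentTransposition s) ∧ L.prod = σ := by
  induction hk : (inversions σ).card using Nat.strong_induction_on generalizing σ with
  | _ k ih =>
    subst hk
    obtain rfl | hσ := eq_or_ne σ 1
    · exact ⟨[], by simp⟩
    · obtain ⟨a, b, hab, hdesc⟩ := exists_covBy_symm_lt_of_ne_one hσ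
      have hcard := Finset.card_lt_card (inversions_swap_mul_ssubset hab hdesc)
      obtain ⟨L, hlen, hL, hprod⟩ := ih _ hcard _ rfl
      refine ⟨Equiv.swap a b :: L, hlen.trans_lt hcard, ?_, ?_⟩
      · exact List.forall_mem_cons.mpr ⟨isAdjacentTransposition_iff.mpr ⟨a, b, hab, rfl⟩, hL⟩
      · rw [List.prod_cons, hprod, Equiv.swap_mul_self_mul]

theorem permLength_eq_card_inversions (σ : Equiv.Perm (Fin n)) :
    permLength σ = (inversions σ).card := by
  obtain ⟨L, hlen, hL, hprod⟩ := exists_adjacentTransposition_list_prod_eq σ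
  refine le_antisymm ((Nat.sInf_le ⟨L, rfl, hL, hprod⟩ : permLength σ ≤ L.length).trans hlen) ?_
  refine le_csInf ⟨_, L, rfl, hL, hprod⟩ ?_
  rintro _ ⟨L', rfl, hL', rfl⟩
  exact card_inversions_list_prod_le L' hL'

theorem inversions_subset_of_weakLe {σ τ : Equiv.Perm (Fin n)} (h : weakLe σ τ) :
    inversions σ ⊆ inversions τ := by
  obtain ⟨ρ, rfl, hlen⟩ := h
  simp only [permLength_eq_card_inversions] at hlen
  exact inversions_subset_of_card_mul_eq hlen

end Length

section DecreasingTree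

variable {ι κ α β : Type*} [LinearOrder ι] [LinearOrder κ] [Preorder α] [Preorder β]

/-- `IsDecreasingTree f S t` says that `t` is the decreasing binary tree of the word `f` restricted
to the set `S` of positions: the root of `t` corresponds to the position of the largest letter, and
the two branches to the subwords on either side of it. The notion is encoded as a relation because
an infinite word, or a word with repeated letters, may have no such tree. -/
inductive IsDecreasingTree (f : ι → α) : Set ι → PBTree → Prop
  | leaf : IsDecreasingTree f ∅ .leaf
  | node {S : Set ι} {m : ι} {l r : PBTree} (mem : m ∈ S) (max : ∀ x ∈ S, x ≠ m → f x < f m)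
      (left : IsDecreasingTree f (S ∩ Set.Iio m) l)
      (right : IsDecreasingTree f (S ∩ Set.Ioi m) r) : IsDecreasingTree f S (.node l r)

namespace IsDecreasingTree

theorem image {f : ι → α} {S : Set ι} {t : PBTree} (ht : IsDecreasingTree f S t) (e : ι ↪o κ)
    {g : κ → β} (hfg : ∀ x ∈ S, ∀ y ∈ S, f x < f y → g (e x) < g (e y)) :
    IsDecreasingTree g (e '' S) t := by
  induction ht with
  | leaf => simpa using leaf
  | @node S m l r mem max _ _ ihl ihr =>
    refine node (Set.mem_image_of_mem e mem) ?_ ?_ ?_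
    · rintro _ ⟨x, hx, rfl⟩ hne
      exact hfg x hx m mem (max x hx (ne_of_apply_ne e hne))
    · rw [← Set.image_inter_preimage, e.preimage_Iio]
      exact ihl fun x hx y hy ↦ hfg x hx.1 y hy.1
    · rw [← Set.image_inter_preimage, e.preimage_Ioi]
      exact ihr fun x hx y hy ↦ hfg x hx.1 y hy.1

theorem exists_treeLe_node {f : ι → α} {S : Set ι} {t : PBTree} (ht : IsDecreasingTree f S t)
    {k : ι} (hk : k ∈ S) (hmax : ∀ x ∈ S, x < k → f x < f k) :
    ∃ l r, IsDecreasingTree f (S ∩ Set.Iio k) l ∧ IsDecreasingTree f (S ∩ Set.Ioi k) r ∧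
      TreeLe t (.node l r) := by
  induction ht with
  | leaf => exact absurd hk (Set.notMem_empty k)
  | @node S m l r mem max left right ihl _ =>
    obtain hkm | rfl | hmk := lt_trichotomy k m
    · obtain ⟨u, v, hu, hv, hle⟩ := ihl ⟨hk, hkm⟩ fun x hx ↦ hmax x hx.1
      refine ⟨u, .node v r, ?_, node (m := m) ⟨mem, hkm⟩ (fun x hx ↦ max x hx.1) ?_ ?_,
        (hle.graft (.refl r)).trans (.rotate u v r)⟩
      · rwa [Set.inter_assoc, Set.Iio_inter_Iio, min_eq_right hkm.le] at hu
      · rwa [Set.inter_right_comm]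
      · rwa [Set.inter_assoc, Set.Ioi_inter_Ioi, max_eq_right hkm.le]
    · exact ⟨l, r, left, right, .refl _⟩
    · exact absurd (hmax m mem hmk) (max k hk hmk.ne').asymm

theorem eq_leaf {f : ι → α} {t : PBTree} (ht : IsDecreasingTree f ∅ t) : t = .leaf := by
  cases ht with
  | leaf => rfl
  | node mem => exact absurd mem (Set.notMem_empty _)

theorem treeLe_of_lt_imp_lt {f : ι → α} {g : ι → β} {S : Set ι} {t w : PBTree}
    (ht : IsDecreasingTree f S t) (hw : IsDecreasingTree g S w)
    (hfg : ∀ x ∈ S, ∀ y ∈ S, x < y → g x < g y → f x < f y) : TreeLe t w := by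
  induction hw generalizing t with
  | leaf => exact ht.eq_leaf ▸ .refl _
  | @node S k _ _ mem max _ _ ihl ihr =>
    have hmax : ∀ x ∈ S, x < k → f x < f k := fun x hx hxk ↦
      hfg x hx k mem hxk (max x hx hxk.ne)
    obtain ⟨l, r, hl, hr, hle⟩ := ht.exists_treeLe_node mem hmax
    exact hle.trans <| .graft
      (ihl hl fun x hx y hy ↦ hfg x hx.1 y hy.1) (ihr hr fun x hx y hy ↦ hfg x hx.1 y hy.1)

end IsDecreasingTree

end DecreasingTree

section Graft

variable {p q : ℕ} (σ : Equiv.Perm (Fin p)) (τ : Equiv.Perm (Fin q))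

theorem blockSum_castAdd (x : Fin p) :
    blockSum σ τ (Fin.castAdd q x) = Fin.castAdd q (σ x) := by
  simp [blockSum]

theorem blockSum_natAdd (y : Fin q) :
    blockSum σ τ (Fin.natAdd p y) = Fin.natAdd p (τ y) := by
  simp [blockSum]

theorem blockSum_one_castSucc (x : Fin p) :
    blockSum σ (1 : Equiv.Perm (Fin 1)) x.castSucc = (σ x).castSucc :=
  blockSum_castAdd σ 1 x

theorem blockSum_one_last :
    blockSum σ (1 : Equiv.Perm (Fin 1)) (Fin.last p) = Fin.last p :=
  blockSum_natAdd σ 1 0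

theorem finRotate_inv_zero (n : ℕ) : (finRotate (n + 1))⁻¹ 0 = Fin.last n := by
  rw [Equiv.Perm.inv_eq_iff_eq, finRotate_last]

theorem finRotate_inv_succ {n : ℕ} (y : Fin n) : (finRotate (n + 1))⁻¹ y.succ = y.castSucc := by
  rw [Equiv.Perm.inv_eq_iff_eq]
  exact (finRotate_of_lt y.isLt).symm

-- `Fin (p + (q + 1))` and `Fin (p + q + 1)` agree definitionally, so `permCast` disappears and
-- positions in a graft can be written with `Fin.castAdd (q + 1)` and `Fin.natAdd p`.
theorem graft_apply (x : Fin (p + (q + 1))) :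
    graft σ τ x = blockSum (blockSum σ τ) (1 : Equiv.Perm (Fin 1))
      (blockSum (1 : Equiv.Perm (Fin p)) (finRotate (q + 1))⁻¹ x) :=
  rfl

theorem graft_castAdd (x : Fin p) :
    graft σ τ (Fin.castAdd (q + 1) x) = (Fin.castAdd q (σ x)).castSucc := by
  rw [graft_apply, blockSum_castAdd, Equiv.Perm.one_apply, ← blockSum_castAdd σ τ]
  exact blockSum_one_castSucc (blockSum σ τ) (Fin.castAdd q x)

theorem graft_natAdd_zero : graft σ τ (Fin.natAdd p (0 : Fin (q + 1))) = Fin.last (p + q) := by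
  rw [graft_apply, blockSum_natAdd, finRotate_inv_zero]
  exact blockSum_one_last _

theorem graft_natAdd_succ (y : Fin q) :
    graft σ τ (Fin.natAdd p y.succ) = (Fin.natAdd p (τ y)).castSucc := by
  rw [graft_apply, blockSum_natAdd, finRotate_inv_succ, ← blockSum_natAdd σ τ]
  exact blockSum_one_castSucc (blockSum σ τ) (Fin.natAdd p y)

variable (γ : Equiv.Perm (Fin (p + q)))

theorem blockSum_one_mul_graft_castAdd (x : Fin p) :
    (blockSum γ (1 : Equiv.Perm (Fin 1)) * graft σ τ) (Fin.castAdd (q + 1) x) =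
      (γ (Fin.castAdd q (σ x))).castSucc := by
  rw [Equiv.Perm.mul_apply, graft_castAdd, blockSum_one_castSucc]

theorem blockSum_one_mul_graft_natAdd_zero :
    (blockSum γ (1 : Equiv.Perm (Fin 1)) * graft σ τ) (Fin.natAdd p (0 : Fin (q + 1))) =
      Fin.last (p + q) := by
  rw [Equiv.Perm.mul_apply, graft_natAdd_zero, blockSum_one_last]

theorem blockSum_one_mul_graft_natAdd_succ (y : Fin q) :
    (blockSum γ (1 : Equiv.Perm (Fin 1)) * graft σ τ) (Fin.natAdd p y.succ) =
      (γ (Fin.natAdd p (τ y))).castSucc := by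
  rw [Equiv.Perm.mul_apply, graft_natAdd_succ, blockSum_one_castSucc]

end Graft

section Psi

theorem Iio_natAdd_zero_eq_range (a b : ℕ) :
    Set.Iio (Fin.natAdd a (0 : Fin (b + 1))) =
      Set.range (Fin.castAddOrderEmb (n := a) (b + 1)) := by
  ext x
  induction x using Fin.addCases with
  | left x => simp [Fin.lt_def]
  | right y =>
    have hne (z : Fin a) : a + y.val ≠ z := by omega
    simpa [Fin.ext_iff, eq_comm] using hne

theorem Ioi_natAdd_zero_eq_range (a b : ℕ) :
    Set.Ioi (Fin.natAdd a (0 : Fin (b + 1))) =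
      Set.range ((Fin.succOrderEmb b).trans (Fin.natAddOrderEmb a)) := by
  ext x
  induction x using Fin.addCases with
  | left x =>
    have hne (z : Fin b) : a + (z.val + 1) ≠ x := by omega
    simpa [Fin.lt_def, Fin.ext_iff, x.isLt.not_gt] using hne
  | right y => cases y using Fin.cases <;> simp [Fin.lt_def, Fin.ext_iff]

theorem PsiRel.isDecreasingTree {n : ℕ} {σ : Equiv.Perm (Fin n)} {t : PBTree} (h : PsiRel σ t) :
    IsDecreasingTree σ Set.univ t := by
  induction h with
  | leaf σ => simpa [Set.univ_eq_empty_iff.mpr inferInstance] using IsDecreasingTree.leaf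
  | @node a b γ σl σr tl tr hγ _ _ ihl ihr =>
    refine .node (m := Fin.natAdd a (0 : Fin (b + 1))) (Set.mem_univ _) ?_ ?_ ?_
    · intro x _ hx
      have hroot := blockSum_one_mul_graft_natAdd_zero σl σr γ
      rw [hroot, Fin.lt_last_iff_ne_last, ← hroot]
      exact (Equiv.injective _).ne hx
    · rw [Set.univ_inter, Iio_natAdd_zero_eq_range, ← Set.image_univ]
      refine ihl.image _ fun x _ y _ hxy ↦ ?_
      have hshuffle : γ (Fin.castAdd b (σl x)) < γ (Fin.castAdd b (σl y)) :=
        hγ.1 _ _ hxy (Fin.castAdd_lt b _)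
      have hword := blockSum_one_mul_graft_castAdd σl σr γ
      exact (hword x).trans_lt <|
        (Fin.castSucc_lt_castSucc_iff.mpr hshuffle).trans_eq (hword y).symm
    · rw [Set.univ_inter, Ioi_natAdd_zero_eq_range, ← Set.image_univ]
      refine ihr.image _ fun x _ y _ hxy ↦ ?_
      have hshuffle : γ (Fin.natAdd a (σr x)) < γ (Fin.natAdd a (σr y)) :=
        hγ.2 _ _ (Fin.le_coe_natAdd a _) (Nat.add_lt_add_left hxy a)
      have hword := blockSum_one_mul_graft_natAdd_succ σl σr γ
      exact (hword x).trans_lt <|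
        (Fin.castSucc_lt_castSucc_iff.mpr hshuffle).trans_eq (hword y).symm

theorem PsiRel.treeLe_of_inversions_subset {n : ℕ} {σ τ : Equiv.Perm (Fin n)} {t w : PBTree}
    (ht : PsiRel σ t) (hw : PsiRel τ w) (hsub : inversions σ ⊆ inversions τ) : TreeLe t w := by
  refine ht.isDecreasingTree.treeLe_of_lt_imp_lt hw.isDecreasingTree fun x _ y _ hxy hτ ↦ ?_
  by_contra! hσ
  have hinv : (x, y) ∈ inversions σ :=
    mk_mem_inversions.mpr ⟨hxy, hσ.lt_of_ne (σ.injective.ne hxy.ne')⟩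
  exact hτ.asymm (mk_mem_inversions.mp (hsub hinv)).2

end Psi

/-- Corollary 2.8: `ψₙ : Sₙ → Yₙ` is a morphism of posets: if `σ ≤ τ`
in the weak Bruhat order on `Sₙ` then `ψₙ(σ) ≤ ψₙ(τ)` in the weak order on `Yₙ`. -/
theorem stmt13 (n : ℕ) (σ τ : Equiv.Perm (Fin n)) (hle : weakLe σ τ)
    (t w : PBTree) (ht : PsiRel σ t) (hw : PsiRel τ w) :
    TreeLe t w := by
  have hsub : inversions σ ⊆ inversions τ := inversions_subset_of_weakLe hle
  exact ht.treeLe_of_inversions_subset hw hsub
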